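/- The polynomial X^(2q^ℓ+1) + hX + e has either zero or three roots in μ_{q²+q+1}. It has three such roots if and only if (e+ω)^((q²−1)/3) = ω^(−ℓ), in which case these three roots are precisely the roots of X³ + h²X² + (e+1)hX + 1. -/

import Mathlib

open Polynomial

local notation "K" => AlgebraicClosure (ZMod 2)

/-!
Let `σ` be the `q`-power Frobenius. If `a` lies in `μ_{q²+q+1}` then `σ³ a = a`, so a root `a` of
`X^(2q^ℓ+1) + hX + e` in `μ_{q²+q+1}` and its images `b = σ^ℓ a`, `c = σ^ℓ b` satisfy
`abc = 1` and `ab² + ha + e = bc² + hb + e = ca² + hc + e = 0`. Eliminating `b` and `c` shows that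
`a` is a root of the cubic `X³ + h²X² + (e+1)hX + 1`. Conversely, the three roots of this cubic are
distinct and can be labelled `r : ZMod 3 → F` so that `r 0, r 1, r 2` solve the cyclic system.
As `r i` determines `r (i + 1)`, there is `j` such that `σ (r i) = r (i + j)` for all `i`, and `r i`
is one of the roots sought iff `ℓ j = 1` in `ZMod 3`, that is, iff `j = ℓ`.

The shift `j` is read off from the Lagrange resolvent `ρ = r 0 + ω² r 1 + ω r 2`: on the one hand
`σ² ρ = ω^(2j) ρ = ω^(-j) ρ`, on the other hand `ρ³ = e³(e + ω)`, whence
`(e + ω)^((q²-1)/3) = ρ^(q²-1) = ω^(-j)`.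
-/

section Shift

theorem iterate_apply_eq_add_nsmul {A α : Type*} [AddMonoid A] {f : α → α} {s : A → α} {j : A}
    (hs : ∀ i, f (s i) = s (i + j)) (n : ℕ) (i : A) : f^[n] (s i) = s (i + n • j) := by
  induction n with
  | zero => simp
  | succ n ih => rw [Function.iterate_succ_apply', ih, hs, add_assoc, succ_nsmul]

theorem mul_mul_eq_prod_zmod_three {M : Type*} [CommMonoid M] (f : ZMod 3 → M) (i : ZMod 3)
    {u : ZMod 3} (hu : u ≠ 0) : f i * f (i + u) * f (i + u + u) = ∏ k, f k := by
  rw [← Equiv.prod_comp ((Equiv.mulLeft₀ u hu).trans (Equiv.addLeft i))]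
  refine Eq.trans ?_ (Fin.prod_univ_three _).symm
  change _ = f (i + u * 0) * f (i + u * 1) * f (i + u * 2)
  congr 2 <;> ring_nf

theorem exists_orbit_of_norm_eq_one {R : Type*} [CommRing R] {σ : R →+* R} {a : R}
    (ha : a * σ a * σ (σ a) = 1) :
    ∃ s : ZMod 3 → R, s 0 = a ∧ (∀ i, σ (s i) = s (i + 1)) ∧ ∏ i, s i = 1 := by
  have hmap : σ a * σ (σ a) * σ (σ (σ a)) = 1 := by
    simpa only [map_mul, map_one] using congrArg σ ha
  have hcycle : σ (σ (σ a)) = a := by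
    linear_combination a * hmap - σ (σ (σ a)) * ha
  refine ⟨![a, σ a, σ (σ a)], rfl, fun i => ?_, (Fin.prod_univ_three _).trans ha⟩
  fin_cases i
  exacts [rfl, rfl, hcycle]

variable {A R : Type*} [AddCommGroup A] [Fintype A] [CommRing R]

/-- The Lagrange resolvent of a family `r` indexed by a finite abelian group, with respect to an
additive character `ψ`. For `A = ZMod 3` and `ω = ψ 1` it is `r 0 + ω² r 1 + ω r 2`. -/
def lagrangeResolvent (ψ : AddChar A R) (r : A → R) : R := ∑ i, ψ (-i) * r i

theorem map_lagrangeResolvent_of_shift {τ : R →+* R} {ψ : AddChar A R} {r : A → R} {j : A}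
    (hψ : ∀ i, τ (ψ i) = ψ i) (hr : ∀ i, τ (r i) = r (i + j)) :
    τ (lagrangeResolvent ψ r) = ψ j * lagrangeResolvent ψ r := by
  calc τ (lagrangeResolvent ψ r) = ∑ i, ψ (-i) * r (i + j) := by
        simp only [lagrangeResolvent, map_sum, map_mul, hψ, hr]
    _ = ∑ i, ψ j * (ψ (-(i + j)) * r (i + j)) := by
        refine Finset.sum_congr rfl fun i _ => ?_
        rw [← mul_assoc, ← AddChar.map_add_eq_mul, neg_add, add_left_comm, add_neg_cancel, add_zero]
    _ = ψ j * lagrangeResolvent ψ r := by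
        rw [← Finset.mul_sum, lagrangeResolvent]
        congr 1
        exact Equiv.sum_comp (Equiv.addRight j) fun i => ψ (-i) * r i

end Shift

section RootsOfUnity

theorem three_mul_four_pow_sub_one_div_three_add_one (m : ℕ) :
    3 * (((2 ^ m) ^ 2 - 1) / 3) + 1 = (2 ^ m) ^ 2 := by
  have hmod : (2 ^ m) ^ 2 % 3 = 1 := by rw [← pow_mul, mul_comm, pow_mul, Nat.pow_mod]; simp
  omega

theorem sq_add_self_add_one_eq_zero {R : Type*} [CommRing R] [IsDomain R] {ω : R}
    (hω4 : ω ^ 4 = ω) (hω2 : ω ^ 2 ≠ ω) : ω ^ 2 + ω + 1 = 0 := by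
  have hmul : (ω ^ 2 - ω) * (ω ^ 2 + ω + 1) = 0 := by linear_combination hω4
  exact (mul_eq_zero_iff_left (sub_ne_zero.2 hω2)).1 hmul

variable {F : Type*} [Field F]

theorem exists_injective_addChar_zmod_three {ω : F} (hω4 : ω ^ 4 = ω) (hω2 : ω ^ 2 ≠ ω) :
    ∃ ψ : AddChar (ZMod 3) F, Function.Injective ψ ∧ ψ 1 = ω := by
  have hω3 : ω ^ 3 = 1 := by
    linear_combination (ω - 1) * sq_add_self_add_one_eq_zero hω4 hω2
  have hω1 : ω ≠ 1 := by rintro rfl; simp at hω2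
  have hω : IsPrimitiveRoot ω 3 := IsPrimitiveRoot.iff_orderOf.2 (orderOf_eq_prime hω3 hω1)
  have hprim := AddChar.zmodChar_primitive_of_primitive_root 3 hω
  refine ⟨AddChar.zmodChar 3 hω3, fun a b hab => ?_, ?_⟩
  · rw [← sub_eq_zero, ← hprim.zmod_char_eq_one_iff, AddChar.map_sub_eq_div, hab]
    exact div_self (AddChar.val_isUnit _ b).ne_zero
  · simpa using AddChar.zmodChar_apply' hω3 1

theorem pow_eq_of_pow_three_eq {ρ e c ζ : F} {n : ℕ} (hρ : ρ ≠ 0) (he : e ≠ 0)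
    (hcube : ρ ^ 3 = e ^ 3 * c) (hen : e ^ (3 * n + 1) = e) (hρn : ρ ^ (3 * n + 1) = ζ * ρ) :
    c ^ n = ζ := by
  have he1 : (e ^ 3) ^ n = 1 := by
    rw [← pow_mul]
    exact mul_right_cancel₀ he (by rw [← pow_succ, hen, one_mul])
  calc c ^ n = (ρ ^ 3) ^ n := by rw [hcube, mul_pow, he1, one_mul]
    _ = ζ := mul_right_cancel₀ hρ (by rw [← pow_mul, ← pow_succ, hρn])

end RootsOfUnity

/-- The cubic `X³ + h²X² + (e+1)hX + 1`, whose roots are the only possible roots of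
`X^(2q^ℓ+1) + hX + e` in `μ_{q²+q+1}`, encoded as the function of `x` it defines. -/
def zhengCubic {F : Type*} [Field F] (h e x : F) : F :=
  x ^ 3 + h ^ 2 * x ^ 2 + (e + 1) * h * x + 1

/-- The cyclic system of equations satisfied by a root `x` of `X^(2q^ℓ+1) + hX + e` in
`μ_{q²+q+1}` together with `y = x^(q^ℓ)` and `z = y^(q^ℓ)`. -/
structure IsCyclicTriple {F : Type*} [Field F] (h e x y z : F) : Prop where
  mul_mul_eq_one : x * y * z = 1
  eq_xy : x * y ^ 2 + h * x + e = 0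
  eq_yz : y * z ^ 2 + h * y + e = 0
  eq_zx : z * x ^ 2 + h * z + e = 0

section CyclicTriple

variable {F : Type*} [Field F] {h e x y z : F}

namespace IsCyclicTriple

theorem rotate (t : IsCyclicTriple h e x y z) : IsCyclicTriple h e y z x :=
  ⟨by linear_combination t.mul_mul_eq_one, t.eq_yz, t.eq_zx, t.eq_xy⟩

theorem ne_zero (t : IsCyclicTriple h e x y z) : x ≠ 0 :=
  left_ne_zero_of_mul (left_ne_zero_of_mul (t.mul_mul_eq_one.trans_ne one_ne_zero))

variable [CharP F 2]

-- `ring` does not know that `2 = 0` in `F`; `grind` finds it from the `CharP F 2` instance.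
theorem mul_sq_add (t : IsCyclicTriple h e x y z) : z * (x ^ 2 + h) = e := by
  linear_combination (norm := grind) t.eq_zx

theorem sq_add (t : IsCyclicTriple h e x y z) : x ^ 2 + h = e * x * y := by
  linear_combination (-(x ^ 2 + h)) * t.mul_mul_eq_one + x * y * t.mul_sq_add

theorem sq_add_ne_zero (t : IsCyclicTriple h e x y z) (he : e ≠ 0) : x ^ 2 + h ≠ 0 :=
  right_ne_zero_of_mul (t.mul_sq_add.trans_ne he)

theorem quartic_eq_zero (t : IsCyclicTriple h e x y z) :
    (x ^ 2 + h) ^ 2 + h * e ^ 2 * x ^ 2 + e ^ 3 * x = 0 := by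
  rw [t.sq_add]
  linear_combination e ^ 2 * x * t.eq_xy

theorem zhengCubic_eq_zero (t : IsCyclicTriple h e x y z) (he : e ≠ 0) :
    zhengCubic h e x = 0 := by
  have eliminate_z : e ^ 2 + h * (x ^ 2 + h) ^ 2 + e ^ 2 * x * (x ^ 2 + h) = 0 := by
    linear_combination (norm := grind)
      (x ^ 2 + h) ^ 2 * t.rotate.rotate.sq_add
        + (z * (x ^ 2 + h) + e + e * x * (x ^ 2 + h)) * t.mul_sq_add
  refine (mul_eq_zero_iff_left (pow_ne_zero 2 he)).1 ?_
  rw [zhengCubic]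
  linear_combination (norm := grind) h * t.quartic_eq_zero + eliminate_z

theorem eq_of_mul_sq_add (t : IsCyclicTriple h e x y z) {b : F}
    (hb : x * b ^ 2 + h * x + e = 0) : b = y := by
  have hsq : x * (b + y) ^ 2 = 0 := by linear_combination (norm := grind) hb + t.eq_xy
  exact CharTwo.add_eq_zero.1 (eq_zero_of_pow_eq_zero ((mul_eq_zero_iff_left t.ne_zero).1 hsq))

theorem add_add_eq (t : IsCyclicTriple h e x y z) (he : e ≠ 0) (hc : h ^ 3 = e ^ 2 + e + 1) :
    x + y + z = h ^ 2 := by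
  refine mul_left_cancel₀ (mul_ne_zero (mul_ne_zero he t.ne_zero) (t.sq_add_ne_zero he)) ?_
  have hcubic := t.zhengCubic_eq_zero he
  rw [zhengCubic] at hcubic
  linear_combination (norm := grind)
    e * x * hcubic + t.quartic_eq_zero + e * x * t.mul_sq_add + (x ^ 2 + h) * t.sq_add + e * x * hc

theorem mul_add_mul_add_mul_eq (t : IsCyclicTriple h e x y z) (he : e ≠ 0)
    (hc : h ^ 3 = e ^ 2 + e + 1) : x * y + y * z + z * x = (e + 1) * h := by
  refine mul_left_cancel₀ he ?_
  linear_combination (norm := grind)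
    t.sq_add + t.rotate.sq_add + t.rotate.rotate.sq_add
      + (x + y + z + h ^ 2) * t.add_add_eq he hc + h * hc

theorem zhengCubic_eq_mul (t : IsCyclicTriple h e x y z) (he : e ≠ 0)
    (hc : h ^ 3 = e ^ 2 + e + 1) (a : F) :
    zhengCubic h e a = (a - x) * (a - y) * (a - z) := by
  rw [zhengCubic, ← t.add_add_eq he hc, ← t.mul_add_mul_add_mul_eq he hc]
  linear_combination (norm := grind) t.mul_mul_eq_one

theorem ne (t : IsCyclicTriple h e x y z) (he : e ≠ 0) (hc : h ^ 3 = e ^ 2 + e + 1) : x ≠ y := by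
  rintro rfl
  have hx : x ^ 2 = (e + 1) * h := by
    linear_combination (norm := grind) t.mul_add_mul_add_mul_eq he hc
  have hz : z = h ^ 2 := by linear_combination (norm := grind) t.add_add_eq he hc
  have hprod : (h * x) ^ 2 = 1 := by rw [← t.mul_mul_eq_one, hz]; ring
  have he3 : e ^ 3 = 0 := by
    linear_combination (norm := grind) hprod + h ^ 2 * hx + (e + 1) * hc
  exact he (eq_zero_of_pow_eq_zero he3)

theorem resolvent_pow_three (t : IsCyclicTriple h e x y z) (he : e ≠ 0)
    (hc : h ^ 3 = e ^ 2 + e + 1) {ω : F} (hω : ω ^ 2 + ω + 1 = 0) :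
    (x + ω ^ 2 * y + ω * z) ^ 3 = e ^ 3 * (e + ω) := by
  have hsum := t.add_add_eq he hc
  have hpairs := t.mul_add_mul_add_mul_eq he hc
  have hleft : x * y ^ 2 + y * z ^ 2 + z * x ^ 2 = e ^ 2 + 1 := by
    linear_combination (norm := grind) t.eq_xy + t.eq_yz + t.eq_zx + h * hsum + hc
  have hright : x ^ 2 * y + y ^ 2 * z + z ^ 2 * x = e ^ 3 + e ^ 2 + 1 := by
    linear_combination (norm := grind)
      (x * y + y * z + z * x) * hsum + h ^ 2 * hpairs + (e + 1) * hc + hleft + t.mul_mul_eq_one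
  have hcubes : x ^ 3 + y ^ 3 + z ^ 3 = e ^ 4 + e ^ 3 + e ^ 2 + 1 := by
    linear_combination (norm := grind)
      ((x + y + z) ^ 2 + (x + y + z) * h ^ 2 + h ^ 4) * hsum
        + (h ^ 3 + e ^ 2 + e + 1) * hc + hright + hleft
  calc (x + ω ^ 2 * y + ω * z) ^ 3
      = (x ^ 3 + y ^ 3 + z ^ 3) + ω ^ 2 * (x ^ 2 * y + y ^ 2 * z + z ^ 2 * x)
        + ω * (x * y ^ 2 + y * z ^ 2 + z * x ^ 2) := by grind
    _ = e ^ 3 * (e + ω) := by rw [hcubes, hright, hleft]; grind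

end IsCyclicTriple

theorem exists_zhengCubic_eq_zero [IsAlgClosed F] (h e : F) : ∃ x, zhengCubic h e x = 0 := by
  have hdeg : (X ^ 3 + C (h ^ 2) * X ^ 2 + C ((e + 1) * h) * X + 1 : F[X]).degree = 3 := by
    compute_degree!
  obtain ⟨x, hx⟩ := IsAlgClosed.exists_root _ (hdeg.trans_ne (by decide))
  exact ⟨x, by simpa [zhengCubic] using hx⟩

variable [CharP F 2]

theorem sq_add_ne_zero_of_zhengCubic_eq_zero (he : e ≠ 0) (hc : h ^ 3 = e ^ 2 + e + 1)
    (hx : zhengCubic h e x = 0) : x ^ 2 + h ≠ 0 := by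
  rw [zhengCubic] at hx
  intro hsq
  obtain rfl : x ^ 2 = h := CharTwo.add_eq_zero.1 hsq
  have hex : e = x ^ 3 + 1 := by
    refine mul_left_cancel₀ he ?_
    linear_combination (norm := grind) hx + hc
  exact he (by linear_combination (norm := grind) hx + (x ^ 3 + 1) * hex)

theorem exists_isCyclicTriple_of_zhengCubic_eq_zero (he : e ≠ 0) (hc : h ^ 3 = e ^ 2 + e + 1)
    (hx : zhengCubic h e x = 0) : ∃ y z, IsCyclicTriple h e x y z := by
  have hx0 : x ≠ 0 := by rintro rfl; simp [zhengCubic] at hx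
  have hsq := sq_add_ne_zero_of_zhengCubic_eq_zero he hc hx
  rw [zhengCubic] at hx
  have hquartic : (x ^ 2 + h) ^ 2 = h * e ^ 2 * x ^ 2 + e ^ 3 * x := by
    linear_combination (norm := grind) (x + h ^ 2) * hx + (h * x ^ 2 + (e + 1) * x) * hc
  refine ⟨(x ^ 2 + h) / (e * x), e / (x ^ 2 + h), ?_, ?_, ?_, ?_⟩
  · field_simp
  · field_simp
    linear_combination (norm := grind) hquartic
  · field_simp
    linear_combination (norm := grind) e ^ 2 * hx + h * hquartic
  · field_simp
    grind

end CyclicTriple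

section TwistedRoots

variable {F : Type*} [Field F] {h e : F} {σ : F →+* F} {r : ZMod 3 → F} {j : ZMod 3} {ℓ : ℕ}

/-- The elements of `μ_{q²+q+1}` that are roots of `X^(2q^ℓ+1) + hX + e`, with an arbitrary ring
endomorphism `σ` in place of the `q`-power Frobenius. -/
def twistedRoots (σ : F →+* F) (ℓ : ℕ) (h e : F) : Set F :=
  {a | a * σ a * σ (σ a) = 1 ∧ a * (σ^[ℓ] a) ^ 2 + h * a + e = 0}

theorem twistedRoots_iterateFrobenius [CharP F 2] (m ℓ : ℕ) (h e : F) :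
    twistedRoots (iterateFrobenius F 2 m) ℓ h e =
      {x | x ^ ((2 ^ m) ^ 2 + 2 ^ m + 1) = 1 ∧ x ^ (2 * (2 ^ m) ^ ℓ + 1) + h * x + e = 0} := by
  have hσ : ⇑(iterateFrobenius F 2 m) = fun x => x ^ 2 ^ m := funext (iterateFrobenius_def 2 m)
  ext x
  simp only [twistedRoots, hσ, pow_iterate, Set.mem_ofPred_eq]
  ring_nf

theorem map_mul_sq_add_eq_zero (hσh : σ h = h) (hσe : σ e = e) {x y : F}
    (hxy : x * y ^ 2 + h * x + e = 0) : σ x * σ y ^ 2 + h * σ x + e = 0 := by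
  simpa only [map_add, map_mul, map_pow, map_zero, hσh, hσe] using congrArg σ hxy

theorem map_zhengCubic (hσh : σ h = h) (hσe : σ e = e) (x : F) :
    σ (zhengCubic h e x) = zhengCubic h e (σ x) := by
  simp only [zhengCubic, map_add, map_mul, map_pow, map_one, hσh, hσe]

namespace IsCyclicTriple

theorem shift (hr : IsCyclicTriple h e (r 0) (r 1) (r 2)) (i : ZMod 3) :
    IsCyclicTriple h e (r i) (r (i + 1)) (r (i + 2)) := by
  fin_cases i
  exacts [hr, hr.rotate, hr.rotate.rotate]

variable [CharP F 2]

theorem injective (hr : IsCyclicTriple h e (r 0) (r 1) (r 2)) (he : e ≠ 0)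
    (hc : h ^ 3 = e ^ 2 + e + 1) : Function.Injective r := by
  have hne (i : ZMod 3) : r i ≠ r (i + 1) := (hr.shift i).ne he hc
  intro i j hij
  have hcases : ∀ i j : ZMod 3, i = j ∨ j = i + 1 ∨ i = j + 1 := by decide
  obtain rfl | rfl | rfl := hcases i j
  exacts [rfl, absurd hij (hne i), absurd hij.symm (hne j)]

theorem zhengCubic_eq_zero_iff (hr : IsCyclicTriple h e (r 0) (r 1) (r 2)) (he : e ≠ 0)
    (hc : h ^ 3 = e ^ 2 + e + 1) {a : F} : zhengCubic h e a = 0 ↔ a ∈ Set.range r := by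
  constructor
  · rw [hr.zhengCubic_eq_mul he hc, mul_eq_zero, mul_eq_zero, sub_eq_zero, sub_eq_zero, sub_eq_zero]
    rintro ((rfl | rfl) | rfl) <;> exact Set.mem_range_self _
  · rintro ⟨i, rfl⟩
    exact (hr.shift i).zhengCubic_eq_zero he

theorem exists_map_eq_add (hr : IsCyclicTriple h e (r 0) (r 1) (r 2)) (he : e ≠ 0)
    (hc : h ^ 3 = e ^ 2 + e + 1) (hσh : σ h = h) (hσe : σ e = e) :
    ∃ j, ∀ i, σ (r i) = r (i + j) := by
  have hroot : zhengCubic h e (σ (r 0)) = 0 := by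
    rw [← map_zhengCubic hσh hσe, hr.zhengCubic_eq_zero he, map_zero]
  obtain ⟨j, hj⟩ := (hr.zhengCubic_eq_zero_iff he hc).1 hroot
  have hstart : σ (r 0) = r (0 + j) := by rw [zero_add, hj]
  have hstep (i : ZMod 3) (hi : σ (r i) = r (i + j)) : σ (r (i + 1)) = r (i + 1 + j) := by
    have hmap := map_mul_sq_add_eq_zero hσh hσe (hr.shift i).eq_xy
    rw [hi] at hmap
    rw [add_right_comm]
    exact (hr.shift (i + j)).eq_of_mul_sq_add hmap
  refine ⟨j, fun i => ?_⟩
  fin_cases i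
  exacts [hstart, hstep 0 hstart, hstep 1 (hstep 0 hstart)]

theorem lagrangeResolvent_pow_three (hr : IsCyclicTriple h e (r 0) (r 1) (r 2)) (he : e ≠ 0)
    (hc : h ^ 3 = e ^ 2 + e + 1) {ψ : AddChar (ZMod 3) F} (hψ : ψ 1 ^ 2 + ψ 1 + 1 = 0) :
    lagrangeResolvent ψ r ^ 3 = e ^ 3 * (e + ψ 1) := by
  have hψ2 : ψ 2 = ψ 1 ^ 2 := AddChar.map_nsmul_eq_pow ψ 2 1
  have hexpand : lagrangeResolvent ψ r = r 0 + ψ 1 ^ 2 * r 1 + ψ 1 * r 2 := by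
    refine (Fin.sum_univ_three _).trans ?_
    change ψ 0 * r 0 + ψ 2 * r 1 + ψ 1 * r 2 = _
    rw [AddChar.map_zero_eq_one, one_mul, hψ2]
  rw [hexpand, hr.resolvent_pow_three he hc hψ]

theorem lagrangeResolvent_ne_zero (hr : IsCyclicTriple h e (r 0) (r 1) (r 2)) (hh : h ≠ 0)
    (he : e ≠ 0) (hc : h ^ 3 = e ^ 2 + e + 1) {ψ : AddChar (ZMod 3) F}
    (hψ : ψ 1 ^ 2 + ψ 1 + 1 = 0) : lagrangeResolvent ψ r ≠ 0 := by
  have heψ : e + ψ 1 ≠ 0 := by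
    intro hzero
    have hh3 : h ^ 3 = 0 := by
      linear_combination (norm := grind) hc + (e + ψ 1 + 1) * hzero + hψ
    exact hh (eq_zero_of_pow_eq_zero hh3)
  refine ne_zero_pow three_ne_zero ?_
  rw [hr.lagrangeResolvent_pow_three he hc hψ]
  exact mul_ne_zero (pow_ne_zero 3 he) heψ

theorem add_pow_eq_addChar_neg (hr : IsCyclicTriple h e (r 0) (r 1) (r 2)) (hh : h ≠ 0)
    (he : e ≠ 0) (hc : h ^ 3 = e ^ 2 + e + 1) (hσe : σ e = e) (hj : ∀ i, σ (r i) = r (i + j))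
    {n : ℕ} (hσn : ∀ x, σ (σ x) = x ^ (3 * n + 1)) {ψ : AddChar (ZMod 3) F}
    (hψ : ψ 1 ^ 2 + ψ 1 + 1 = 0) : (e + ψ 1) ^ n = ψ (-j) := by
  have hψ3 (i : ZMod 3) : ψ i ^ 3 = 1 := by
    rw [← AddChar.map_nsmul_eq_pow, nsmul_eq_mul, CharP.cast_eq_zero, zero_mul,
      AddChar.map_zero_eq_one]
  have hψfix (i : ZMod 3) : (σ.comp σ) (ψ i) = ψ i := by
    rw [RingHom.comp_apply, hσn, pow_succ, pow_mul, hψ3, one_pow, one_mul]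
  have hshift (i : ZMod 3) : (σ.comp σ) (r i) = r (i + -j) := by
    have hdouble : ∀ i j : ZMod 3, i + j + j = i + -j := by decide
    rw [RingHom.comp_apply, hj, hj, hdouble]
  refine pow_eq_of_pow_three_eq (hr.lagrangeResolvent_ne_zero hh he hc hψ) he
    (hr.lagrangeResolvent_pow_three he hc hψ) (by rw [← hσn, hσe, hσe]) ?_
  rw [← hσn]
  exact map_lagrangeResolvent_of_shift hψfix hshift

theorem mem_twistedRoots_iff (hr : IsCyclicTriple h e (r 0) (r 1) (r 2)) (he : e ≠ 0)
    (hc : h ^ 3 = e ^ 2 + e + 1) (hj : ∀ i, σ (r i) = r (i + j)) (i : ZMod 3) :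
    r i ∈ twistedRoots σ ℓ h e ↔ ℓ * j = 1 := by
  have hiter : σ^[ℓ] (r i) = r (i + ℓ * j) := by
    rw [iterate_apply_eq_add_nsmul hj, nsmul_eq_mul]
  rw [twistedRoots, Set.mem_ofPred_eq, hiter, hj, hj]
  constructor
  · rintro ⟨-, hroot⟩
    exact add_left_cancel (hr.injective he hc ((hr.shift i).eq_of_mul_sq_add hroot))
  · intro hℓj
    have hj0 : j ≠ 0 := right_ne_zero_of_mul (hℓj.trans_ne one_ne_zero)
    rw [mul_mul_eq_prod_zmod_three r i hj0, hℓj]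
    exact ⟨(Fin.prod_univ_three r).trans hr.mul_mul_eq_one, (hr.shift i).eq_xy⟩

end IsCyclicTriple

variable [CharP F 2]

theorem zhengCubic_eq_zero_of_mem_twistedRoots (hℓ : (ℓ : ZMod 3) ≠ 0) (he : e ≠ 0)
    (hσh : σ h = h) (hσe : σ e = e) {a : F} (ha : a ∈ twistedRoots σ ℓ h e) :
    zhengCubic h e a = 0 := by
  obtain ⟨s, rfl, hs, hprod⟩ := exists_orbit_of_norm_eq_one ha.1
  have hτ (i : ZMod 3) : (σ ^ ℓ) (s i) = s (i + ℓ) := by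
    rw [RingHom.coe_pow, iterate_apply_eq_add_nsmul hs, nsmul_one]
  have hfix {c : F} (hc : σ c = c) : (σ ^ ℓ) c = c := by
    rw [RingHom.coe_pow]
    exact Function.iterate_fixed hc ℓ
  have hclose : ∀ k : ZMod 3, 0 + k + k + k = 0 := by decide
  have h01 : s 0 * s (0 + ℓ) ^ 2 + h * s 0 + e = 0 := by
    rw [← hτ, RingHom.coe_pow]
    exact ha.2
  have h12 := map_mul_sq_add_eq_zero (hfix hσh) (hfix hσe) h01
  have h20 := map_mul_sq_add_eq_zero (hfix hσh) (hfix hσe) h12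
  simp only [hτ, hclose] at h12 h20
  have hnorm : s 0 * s (0 + ℓ) * s (0 + ℓ + ℓ) = 1 := by
    rw [mul_mul_eq_prod_zmod_three s 0 hℓ, hprod]
  exact IsCyclicTriple.zhengCubic_eq_zero ⟨hnorm, h01, h12, h20⟩ he

theorem IsCyclicTriple.twistedRoots_eq_ite (hr : IsCyclicTriple h e (r 0) (r 1) (r 2))
    (he : e ≠ 0) (hc : h ^ 3 = e ^ 2 + e + 1) (hσh : σ h = h) (hσe : σ e = e)
    (hj : ∀ i, σ (r i) = r (i + j)) (hℓ : (ℓ : ZMod 3) ≠ 0) :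
    twistedRoots σ ℓ h e = if ℓ * j = 1 then Set.range r else ∅ := by
  have hsub : twistedRoots σ ℓ h e ⊆ Set.range r := fun a ha =>
    (hr.zhengCubic_eq_zero_iff he hc).1 (zhengCubic_eq_zero_of_mem_twistedRoots hℓ he hσh hσe ha)
  split_ifs with hℓj
  · exact hsub.antisymm (Set.range_subset_iff.2 fun i => (hr.mem_twistedRoots_iff he hc hj i).2 hℓj)
  · refine Set.eq_empty_of_forall_notMem fun a ha => ?_
    obtain ⟨i, rfl⟩ := hsub ha
    exact hℓj ((hr.mem_twistedRoots_iff he hc hj i).1 ha)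

theorem IsCyclicTriple.add_pow_eq_inv_iff (hr : IsCyclicTriple h e (r 0) (r 1) (r 2)) (hh : h ≠ 0)
    (he : e ≠ 0) (hc : h ^ 3 = e ^ 2 + e + 1) (hσe : σ e = e) (hj : ∀ i, σ (r i) = r (i + j))
    (hℓ : (ℓ : ZMod 3) ≠ 0) {n : ℕ} (hσn : ∀ x, σ (σ x) = x ^ (3 * n + 1)) {ω : F}
    (hω4 : ω ^ 4 = ω) (hω2 : ω ^ 2 ≠ ω) : (e + ω) ^ n = (ω ^ ℓ)⁻¹ ↔ ℓ * j = 1 := by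
  obtain ⟨ψ, hψ, rfl⟩ := exists_injective_addChar_zmod_three hω4 hω2
  have hψ1 := sq_add_self_add_one_eq_zero hω4 hω2
  have hψℓ : (ψ 1 ^ ℓ)⁻¹ = ψ (-ℓ) := by
    rw [← AddChar.map_nsmul_eq_pow, nsmul_one, AddChar.map_neg_eq_inv]
  rw [hr.add_pow_eq_addChar_neg hh he hc hσe hj hσn hψ1, hψℓ, hψ.eq_iff, neg_inj]
  have hinv : ∀ k j : ZMod 3, k ≠ 0 → (j = k ↔ k * j = 1) := by decide
  exact hinv ℓ j hℓ

end TwistedRoots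

theorem zheng_open_problem_general {F : Type*} [Field F] [CharP F 2] [IsAlgClosed F]
    {m ℓ q : ℕ} (hℓ3 : Nat.Coprime ℓ 3) (hq : q = 2 ^ m)
    {ω : F} (hω4 : ω ^ 4 = ω) (hω2 : ω ^ 2 ≠ ω)
    {h e : F} (hhq : h ^ q = h) (hh : h ≠ 0) (heq : e ^ q = e) (he : e ≠ 0)
    (hcube : h ^ 3 = e ^ 2 + e + 1) {S : Set F}
    (hS : S = {x : F | x ^ (q ^ 2 + q + 1) = 1 ∧ x ^ (2 * q ^ ℓ + 1) + h * x + e = 0}) :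
    (S.ncard = 0 ∨ S.ncard = 3) ∧
    (S.ncard = 3 ↔ (e + ω) ^ ((q ^ 2 - 1) / 3) = (ω ^ ℓ)⁻¹) ∧
    (S.ncard = 3 → S = {x : F | x ^ 3 + h ^ 2 * x ^ 2 + (e + 1) * h * x + 1 = 0}) := by
  subst hq
  have hℓ : (ℓ : ZMod 3) ≠ 0 := ((ZMod.isUnit_iff_coprime ℓ 3).2 hℓ3).ne_zero
  have hσ := iterateFrobenius_def (R := F) 2 m
  have hσσ (x : F) : iterateFrobenius F 2 m (iterateFrobenius F 2 m x) =
      x ^ (3 * (((2 ^ m) ^ 2 - 1) / 3) + 1) := by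
    rw [three_mul_four_pow_sub_one_div_three_add_one, hσ, hσ, ← pow_mul, sq]
  obtain ⟨x, hx⟩ := exists_zhengCubic_eq_zero h e
  obtain ⟨y, z, t⟩ := exists_isCyclicTriple_of_zhengCubic_eq_zero he hcube hx
  obtain ⟨r, hr⟩ : ∃ r : ZMod 3 → F, IsCyclicTriple h e (r 0) (r 1) (r 2) := ⟨![x, y, z], t⟩
  rw [← hσ] at hhq heq
  obtain ⟨j, hj⟩ := hr.exists_map_eq_add he hcube hhq heq
  have hroots : {x | zhengCubic h e x = 0} = Set.range r :=
    Set.ext fun _ => hr.zhengCubic_eq_zero_iff he hcube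
  have hcard : (Set.range r).ncard = 3 := by
    rw [Set.ncard_range_of_injective (hr.injective he hcube), Nat.card_zmod]
  rw [← twistedRoots_iterateFrobenius, hr.twistedRoots_eq_ite he hcube hhq heq hj hℓ] at hS
  rw [hr.add_pow_eq_inv_iff hh he hcube heq hj hℓ hσσ hω4 hω2]
  change _ ∧ _ ∧ (_ → S = {x | zhengCubic h e x = 0})
  rw [hroots, hS]
  split_ifs with hℓj <;> simp [hℓj, hcard]

/-- Proposition 7.1 / Corollary 1.5: the polynomial `X^(2q^ℓ+1) + hX + e` has either zero
or three roots in `μ_{q²+q+1}`; it has three such roots iff `(e+ω)^((q²−1)/3) = ω^(−ℓ)`,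
in which case they are precisely the roots of `X³ + h²X² + (e+1)hX + 1`. -/
theorem zheng_open_problem
    (m : ℕ) (hm : 0 < m) (ℓ : ℕ) (hℓ : 0 < ℓ) (hℓ3 : Nat.Coprime ℓ 3)
    (q : ℕ) (hq : q = 2 ^ m)
    (ω : K) (hω4 : ω ^ 4 = ω) (hω2 : ω ^ 2 ≠ ω)
    (h e : K) (hhq : h ^ q = h) (hh2 : h ^ 2 ≠ h)
    (heq : e ^ q = e) (he2 : e ^ 2 ≠ e)
    (hcube : h ^ 3 = e ^ 2 + e + 1)
    (S : Set K)
    (hS : S = {x : K | x ^ (q ^ 2 + q + 1) = 1 ∧ x ^ (2 * q ^ ℓ + 1) + h * x + e = 0}) :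
    (S.ncard = 0 ∨ S.ncard = 3) ∧
    (S.ncard = 3 ↔ (e + ω) ^ ((q ^ 2 - 1) / 3) = (ω ^ ℓ)⁻¹) ∧
    (S.ncard = 3 → S = {x : K | x ^ 3 + h ^ 2 * x ^ 2 + (e + 1) * h * x + 1 = 0}) :=
  zheng_open_problem_general hℓ3 hq hω4 hω2 hhq (by rintro rfl; simp at hh2) heq
    (by rintro rfl; simp at he2) hcube hS
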